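/- A continuous function f : (0,∞) → (0,∞) is operator monotone if and only if f(A !_t B) ≤ f(A) !_t f(B) for every n ∈ ℕ, all n×n positive definite complex matrices A, B, and every t ∈ [0,1]. -/

import Mathlib

open Matrix
open scoped ComplexOrder

/-- The Loewner order on matrices: `A ≤ B` iff `B - A` is positive semidefinite. -/
def MLE {n : ℕ} (A B : Matrix (Fin n) (Fin n) ℂ) : Prop := (B - A).PosSemidef

/-- The `t`-weighted harmonic mean `A !_t B = ((1-t)A⁻¹ + tB⁻¹)⁻¹`. -/
noncomputable def wharm {n : ℕ} (t : ℝ) (A B : Matrix (Fin n) (Fin n) ℂ) :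
    Matrix (Fin n) (Fin n) ℂ := ((1 - t) • A⁻¹ + t • B⁻¹)⁻¹

/-- The `t`-weighted arithmetic mean `A ∇_t B = (1-t)A + tB`. -/
noncomputable def warith {n : ℕ} (t : ℝ) (A B : Matrix (Fin n) (Fin n) ℂ) :
    Matrix (Fin n) (Fin n) ℂ := (1 - t) • A + t • B

/-- Real powers of a matrix, via the continuous functional calculus. -/
noncomputable def mpow {n : ℕ} (A : Matrix (Fin n) (Fin n) ℂ) (r : ℝ) :
    Matrix (Fin n) (Fin n) ℂ := cfc (fun x : ℝ => x ^ r) A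

/-- The `t`-weighted geometric mean `A #_t B = A^{1/2} (A^{-1/2} B A^{-1/2})^t A^{1/2}`. -/
noncomputable def wgeom {n : ℕ} (t : ℝ) (A B : Matrix (Fin n) (Fin n) ℂ) :
    Matrix (Fin n) (Fin n) ℂ :=
  mpow A (1/2) * mpow (mpow A (-(1/2)) * B * mpow A (-(1/2))) t * mpow A (1/2)

/-- `f` is operator monotone (increasing): order preserving on positive definite
matrices of every size, via the continuous functional calculus. -/
def OperatorMonotone (f : ℝ → ℝ) : Prop :=
  ∀ (n : ℕ) (A B : Matrix (Fin n) (Fin n) ℂ), A.PosDef → B.PosDef →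
    MLE A B → MLE (cfc f A) (cfc f B)

/-- `f` is operator monotone decreasing: order reversing on positive definite
matrices of every size, via the continuous functional calculus. -/
def OperatorAntitone (f : ℝ → ℝ) : Prop :=
  ∀ (n : ℕ) (A B : Matrix (Fin n) (Fin n) ℂ), A.PosDef → B.PosDef →
    MLE A B → MLE (cfc f B) (cfc f A)

lemma cont_spec {n : ℕ} (f : ℝ → ℝ) (A : Matrix (Fin n) (Fin n) ℂ) :
    ContinuousOn f (spectrum ℝ A) := (Matrix.finite_real_spectrum (A := A)).continuousOn f

lemma spec_pos {n : ℕ} {A : Matrix (Fin n) (Fin n) ℂ} (hA : A.PosDef) :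
    ∀ x ∈ spectrum ℝ A, 0 < x := by
  intro x hx
  rw [hA.1.spectrum_real_eq_range_eigenvalues] at hx
  obtain ⟨i, rfl⟩ := hx
  exact hA.eigenvalues_pos i

lemma cfc_posSemidef {n : ℕ} {A : Matrix (Fin n) (Fin n) ℂ} (hA : A.PosDef) (f : ℝ → ℝ)
    (hf : ∀ x, 0 < x → 0 ≤ f x) : (cfc f A).PosSemidef := by
  rw [hA.1.cfc_eq, Matrix.IsHermitian.cfc, Unitary.conjStarAlgAut_apply]
  apply Matrix.PosSemidef.mul_mul_conjTranspose_same
  refine Matrix.PosSemidef.diagonal ?_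
  intro i
  simpa using hf _ (hA.eigenvalues_pos i)

lemma cfc_mul_inv {n : ℕ} {A : Matrix (Fin n) (Fin n) ℂ} (hA : A.PosDef) (f : ℝ → ℝ)
    (hf : ∀ x, 0 < x → f x ≠ 0) : cfc f A * cfc (fun x => (f x)⁻¹) A = 1 := by
  have hs : IsSelfAdjoint A := hA.1
  rw [← cfc_mul f (fun x => (f x)⁻¹) A (cont_spec _ _) (cont_spec _ _)]
  rw [cfc_congr (g := fun _ => (1:ℝ)), cfc_const_one ℝ A]
  intro x hx
  simp [hf x (spec_pos hA x hx)]

lemma cfc_posDef {n : ℕ} {A : Matrix (Fin n) (Fin n) ℂ} (hA : A.PosDef) (f : ℝ → ℝ)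
    (hf : ∀ x, 0 < x → 0 < f x) : (cfc f A).PosDef := by
  rw [(cfc_posSemidef hA f fun x hx => (hf x hx).le).posDef_iff_isUnit]
  exact IsUnit.of_mul_eq_one _ (cfc_mul_inv hA f fun x hx => (hf x hx).ne')

lemma inv_eq_cfc {n : ℕ} {A : Matrix (Fin n) (Fin n) ℂ} (hA : A.PosDef) :
    A⁻¹ = cfc (fun x : ℝ => x⁻¹) A := by
  have hs : IsSelfAdjoint A := hA.1
  apply Matrix.inv_eq_right_inv
  have := cfc_mul_inv hA (fun x => x) (fun x hx => hx.ne')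
  rwa [cfc_id' ℝ A] at this

lemma cfc_conj {n : ℕ} {A : Matrix (Fin n) (Fin n) ℂ} (hA : A.PosDef) (f : ℝ → ℝ)
    (hf : ∀ x, 0 < x → 0 < f x) :
    cfc (fun x => (f x⁻¹)⁻¹) A = (cfc f A⁻¹)⁻¹ := by
  have hs : IsSelfAdjoint A := hA.1
  symm
  apply Matrix.inv_eq_right_inv
  rw [inv_eq_cfc hA, ← cfc_comp' f (fun x : ℝ => x⁻¹) A
    ((Matrix.finite_real_spectrum (A := A)).image _ |>.continuousOn f) (cont_spec _ _)]
  exact cfc_mul_inv hA (fun x => f x⁻¹) (fun x hx => (hf _ (inv_pos.2 hx)).ne')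

lemma mle_inv {n : ℕ} {A B : Matrix (Fin n) (Fin n) ℂ} (hA : A.PosDef) (hB : B.PosDef)
    (h : MLE A B) : MLE B⁻¹ A⁻¹ := by
  unfold MLE at *
  have : Invertible A := hA.isUnit.invertible
  have : Invertible A⁻¹ := hA.inv.isUnit.invertible
  have : Invertible B := hB.isUnit.invertible
  have h1 := Matrix.PosDef.fromBlocks₂₂ B (1 : Matrix (Fin n) (Fin n) ℂ) hA.inv
  have h2 := Matrix.PosDef.fromBlocks₁₁ (1 : Matrix (Fin n) (Fin n) ℂ) A⁻¹ hB
  simp only [Matrix.conjTranspose_one, one_mul, mul_one, Matrix.inv_inv_of_invertible] at h1 h2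
  exact h2.1 (h1.2 h)

/-- intertwining -/
lemma cfc_intertwine {m n : ℕ} {A : Matrix (Fin m) (Fin m) ℂ} {B : Matrix (Fin n) (Fin n) ℂ}
    (hA : A.IsHermitian) (hB : B.IsHermitian) (S : Matrix (Fin m) (Fin n) ℂ)
    (h : A * S = S * B) (f : ℝ → ℝ) : cfc f A * S = S * cfc f B := by
  have hA' : IsSelfAdjoint A := hA
  have hB' : IsSelfAdjoint B := hB
  let s : Finset ℝ := ((Matrix.finite_real_spectrum (A := A)).union
    (Matrix.finite_real_spectrum (A := B))).toFinset
  let p := Lagrange.interpolate s id f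
  have hp : ∀ x ∈ s, f x = p.eval x := fun x hx =>
    (Lagrange.eval_interpolate_at_node f (v := id) (Set.injOn_id _) hx).symm
  rw [cfc_congr (f := f) (g := p.eval) (a := A) (fun x hx => hp x (by simp [s, hx])),
    cfc_congr (f := f) (g := p.eval) (a := B) (fun x hx => hp x (by simp [s, hx])),
    cfc_polynomial p A, cfc_polynomial p B]
  generalize p = q
  induction q using Polynomial.induction_on' with
  | add p q hp hq => simp [Matrix.add_mul, Matrix.mul_add, hp, hq]
  | monomial k a =>
    have : A ^ k * S = S * B ^ k := by
      induction k with
      | zero => simp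
      | succ k ih => rw [pow_succ, Matrix.mul_assoc, h, ← Matrix.mul_assoc, ih, Matrix.mul_assoc, ← pow_succ]
    simp only [Polynomial.aeval_monomial, ← Algebra.smul_def, Matrix.smul_mul, Matrix.mul_smul, this]

lemma mle_limit {n : ℕ} {M B : Matrix (Fin n) (Fin n) ℂ} (hM : M.IsHermitian) (hB : B.PosDef)
    (h : ℝ → ℝ) (H : ℝ → ℝ → ℝ) (l : Filter ℝ) [l.NeBot]
    (h1 : ∀ᶠ s in l, MLE M (cfc (H s) B))
    (h2 : ∀ x, 0 < x → Filter.Tendsto (fun s => H s x) l (nhds (h x))) : MLE M (cfc h B) := by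
  have hT : Filter.Tendsto (fun s => cfc (H s) B) l (nhds (cfc h B)) := by
    simp only [hB.1.cfc_eq, Matrix.IsHermitian.cfc, Unitary.conjStarAlgAut_apply]
    refine Filter.Tendsto.mul (Filter.Tendsto.mul tendsto_const_nhds ?_) tendsto_const_nhds
    refine ((continuous_id.matrix_diagonal).tendsto _).comp ?_
    rw [tendsto_pi_nhds]
    intro i
    exact (Complex.continuous_ofReal.tendsto _).comp (h2 _ (hB.eigenvalues_pos i))
  have hs : (cfc h B).IsHermitian := cfc_predicate h B
  refine Matrix.PosSemidef.of_dotProduct_mulVec_nonneg (hs.sub hM) fun x => ?_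
  have hc : Continuous fun N : Matrix (Fin n) (Fin n) ℂ => star x ⬝ᵥ ((N - M) *ᵥ x) := by fun_prop
  exact ge_of_tendsto ((hc.tendsto _).comp hT) (h1.mono fun s hs => hs.dotProduct_mulVec_nonneg x)

lemma orth_mul {N n : ℕ} {V₁ V₂ : Matrix (Fin N) (Fin n) ℂ} (X Y : Matrix (Fin n) (Fin n) ℂ)
    (h11 : V₁ᴴ * V₁ = 1) (h21 : V₂ᴴ * V₁ = 0) :
    (V₁ * X * V₁ᴴ + V₂ * Y * V₂ᴴ) * V₁ = V₁ * X := by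
  simp [Matrix.add_mul, Matrix.mul_assoc, h11, h21]

lemma orth_posDef {N n : ℕ} {V₁ V₂ : Matrix (Fin N) (Fin n) ℂ} {X Y : Matrix (Fin n) (Fin n) ℂ}
    (hX : X.PosDef) (hY : Y.PosDef)
    (h11 : V₁ᴴ * V₁ = 1) (h22 : V₂ᴴ * V₂ = 1) (h12 : V₁ᴴ * V₂ = 0) (h21 : V₂ᴴ * V₁ = 0)
    (hs : V₁ * V₁ᴴ + V₂ * V₂ᴴ = 1) :
    (V₁ * X * V₁ᴴ + V₂ * Y * V₂ᴴ).PosDef := by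
  have hp : (V₁ * X * V₁ᴴ + V₂ * Y * V₂ᴴ).PosSemidef :=
    (hX.posSemidef.mul_mul_conjTranspose_same V₁).add (hY.posSemidef.mul_mul_conjTranspose_same V₂)
  rw [hp.posDef_iff_isUnit]
  have e1 := orth_mul (V₁ := V₁) (V₂ := V₂) X Y h11 h21
  have e2 := orth_mul (V₁ := V₂) (V₂ := V₁) Y X h22 h12
  rw [add_comm] at e2
  have hXX : X * X⁻¹ = 1 := Matrix.mul_nonsing_inv X ((Matrix.isUnit_iff_isUnit_det X).1 hX.isUnit)
  have hYY : Y * Y⁻¹ = 1 := Matrix.mul_nonsing_inv Y ((Matrix.isUnit_iff_isUnit_det Y).1 hY.isUnit)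
  refine IsUnit.of_mul_eq_one (V₁ * X⁻¹ * V₁ᴴ + V₂ * Y⁻¹ * V₂ᴴ) ?_
  rw [Matrix.mul_add, ← Matrix.mul_assoc, ← Matrix.mul_assoc, e1, ← Matrix.mul_assoc,
    ← Matrix.mul_assoc, e2, Matrix.mul_assoc V₁, hXX, Matrix.mul_assoc V₂, hYY, Matrix.mul_one,
    Matrix.mul_one, hs]

lemma exists_orth (n : ℕ) : ∃ V₁ V₂ : Matrix (Fin (n + n)) (Fin n) ℂ,
    V₁ᴴ * V₁ = 1 ∧ V₂ᴴ * V₂ = 1 ∧ V₁ᴴ * V₂ = 0 ∧ V₂ᴴ * V₁ = 0 ∧ V₁ * V₁ᴴ + V₂ * V₂ᴴ = 1 := by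
  refine ⟨(Matrix.fromRows (1 : Matrix (Fin n) (Fin n) ℂ) (0 : Matrix (Fin n) (Fin n) ℂ)).submatrix
      finSumFinEquiv.symm id,
    (Matrix.fromRows (0 : Matrix (Fin n) (Fin n) ℂ) (1 : Matrix (Fin n) (Fin n) ℂ)).submatrix
      finSumFinEquiv.symm id, ?_, ?_, ?_, ?_, ?_⟩
  · rw [Matrix.conjTranspose_submatrix, Matrix.submatrix_mul_equiv]
    simp [Matrix.conjTranspose_fromRows_eq_fromCols_conjTranspose, Matrix.fromCols_mul_fromRows]
  · rw [Matrix.conjTranspose_submatrix, Matrix.submatrix_mul_equiv]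
    simp [Matrix.conjTranspose_fromRows_eq_fromCols_conjTranspose, Matrix.fromCols_mul_fromRows]
  · rw [Matrix.conjTranspose_submatrix, Matrix.submatrix_mul_equiv]
    simp [Matrix.conjTranspose_fromRows_eq_fromCols_conjTranspose, Matrix.fromCols_mul_fromRows]
  · rw [Matrix.conjTranspose_submatrix, Matrix.submatrix_mul_equiv]
    simp [Matrix.conjTranspose_fromRows_eq_fromCols_conjTranspose, Matrix.fromCols_mul_fromRows]
  · ext i j
    obtain ⟨i, rfl⟩ := finSumFinEquiv.surjective i
    obtain ⟨j, rfl⟩ := finSumFinEquiv.surjective j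
    rcases i with i | i <;> rcases j with j | j <;>
      simp [Matrix.mul_apply, Matrix.one_apply, -finSumFinEquiv_apply_left, -finSumFinEquiv_apply_right, eq_comm]

lemma concave_core {N n : ℕ} (g : ℝ → ℝ) (hm : OperatorMonotone g)
    {V₁ V₂ W₁ W₂ : Matrix (Fin N) (Fin n) ℂ} {X Y Z E : Matrix (Fin n) (Fin n) ℂ}
    (hX : X.PosDef) (hY : Y.PosDef) (hZ : Z.PosDef) (hE : E.PosDef)
    (h11 : V₁ᴴ * V₁ = 1) (h22 : V₂ᴴ * V₂ = 1) (h12 : V₁ᴴ * V₂ = 0) (h21 : V₂ᴴ * V₁ = 0)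
    (hs : V₁ * V₁ᴴ + V₂ * V₂ᴴ = 1)
    (k11 : W₁ᴴ * W₁ = 1) (k22 : W₂ᴴ * W₂ = 1) (k12 : W₁ᴴ * W₂ = 0) (k21 : W₂ᴴ * W₁ = 0)
    (ks : W₁ * W₁ᴴ + W₂ * W₂ᴴ = 1)
    (eZ : W₁ᴴ * (V₁ * X * V₁ᴴ + V₂ * Y * V₂ᴴ) * W₁ = Z)
    (eE : W₂ᴴ * (V₁ * X * V₁ᴴ + V₂ * Y * V₂ᴴ) * W₂ = E)
    (a b : ℝ) (hW : W₁ = a • V₁ + b • V₂) (r : ℝ) (hr : 0 < r) :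
    MLE ((a * a) • cfc g X + (b * b) • cfc g Y) (cfc g ((1 + r ^ 2) • Z)) := by
  have hT := orth_posDef hX hY h11 h22 h12 h21 hs
  have e1 := orth_mul (V₁ := V₁) (V₂ := V₂) X Y h11 h21
  have e2 := orth_mul (V₁ := V₂) (V₂ := V₁) Y X h22 h12
  rw [add_comm] at e2
  generalize hTT : V₁ * X * V₁ᴴ + V₂ * Y * V₂ᴴ = T at *
  have hZ' : ((1 + r ^ 2) • Z).PosDef := hZ.smul (by positivity)
  have hE' : ((1 + (r⁻¹) ^ 2) • E).PosDef := hE.smul (by positivity)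
  have hD := orth_posDef hZ' hE' k11 k22 k12 k21 ks
  have e3 := orth_mul (V₁ := W₁) (V₂ := W₂) ((1 + r ^ 2) • Z) ((1 + (r⁻¹) ^ 2) • E) k11 k21
  have hTD : MLE T (W₁ * ((1 + r ^ 2) • Z) * W₁ᴴ + W₂ * ((1 + (r⁻¹) ^ 2) • E) * W₂ᴴ) := by
    unfold MLE
    have := hT.posSemidef.mul_mul_conjTranspose_same (r • (W₁ * W₁ᴴ) - r⁻¹ • (W₂ * W₂ᴴ))
    convert this using 1
    have hPQ : T = (W₁ * W₁ᴴ + W₂ * W₂ᴴ) * T * (W₁ * W₁ᴴ + W₂ * W₂ᴴ) := by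
      rw [ks, Matrix.one_mul, Matrix.mul_one]
    conv_lhs => rw [hPQ, ← eZ, ← eE]
    simp only [Matrix.conjTranspose_sub, Matrix.conjTranspose_smul, Matrix.conjTranspose_mul,
      Matrix.conjTranspose_conjTranspose, star_trivial, Matrix.mul_add, Matrix.add_mul,
      Matrix.mul_sub, Matrix.sub_mul, Matrix.smul_mul, Matrix.mul_smul, Matrix.mul_assoc,
      smul_smul]
    match_scalars <;> field_simp
    all_goals ring
  have key := (hm _ _ _ hT hD hTD).conjTranspose_mul_mul_same W₁
  have f1 := cfc_intertwine hT.1 hX.1 V₁ e1 g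
  have f2 := cfc_intertwine hT.1 hY.1 V₂ e2 g
  have f3 := cfc_intertwine hD.1 hZ'.1 W₁ e3 g
  unfold MLE
  convert key using 1
  rw [Matrix.mul_assoc, Matrix.sub_mul, f3, Matrix.mul_sub, ← Matrix.mul_assoc, k11, Matrix.one_mul]
  congr 1
  rw [hW]
  simp only [Matrix.conjTranspose_add, Matrix.conjTranspose_smul, star_trivial, Matrix.mul_add,
    Matrix.add_mul, Matrix.smul_mul, Matrix.mul_smul, f1, f2, ← Matrix.mul_assoc, h11, h22, h12,
    h21, Matrix.one_mul, Matrix.zero_mul, smul_zero, add_zero, zero_add, smul_smul]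

def OpConcave (g : ℝ → ℝ) : Prop :=
  ∀ (n : ℕ) (X Y : Matrix (Fin n) (Fin n) ℂ), X.PosDef → Y.PosDef → ∀ t ∈ Set.Icc (0:ℝ) 1,
    MLE ((1 - t) • cfc g X + t • cfc g Y) (cfc g ((1 - t) • X + t • Y))

lemma comb_posDef {n : ℕ} {X Y : Matrix (Fin n) (Fin n) ℂ} (hX : X.PosDef) (hY : Y.PosDef)
    {t : ℝ} (ht : t ∈ Set.Icc (0:ℝ) 1) : ((1 - t) • X + t • Y).PosDef := by
  rcases ht.1.eq_or_lt with h | h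
  · subst h; simpa using hX
  · exact Matrix.PosDef.posSemidef_add (hX.posSemidef.smul (sub_nonneg.2 ht.2)) (hY.smul h)

lemma concave_of_mono (g : ℝ → ℝ) (hg : ContinuousOn g (Set.Ioi 0)) (hm : OperatorMonotone g) :
    OpConcave g := by
  intro n X Y hX hY t ht
  obtain ⟨V₁, V₂, h11, h22, h12, h21, hs⟩ := exists_orth n
  have ha : √(1 - t) * √(1 - t) = 1 - t := Real.mul_self_sqrt (sub_nonneg.2 ht.2)
  have hb : √t * √t = t := Real.mul_self_sqrt ht.1
  generalize √(1 - t) = a at ha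
  generalize √t = b at hb
  have hab : a * a + b * b = 1 := by rw [ha, hb]; ring
  have hZ := comb_posDef hX hY ht
  have hE := comb_posDef hY hX ht
  have hM : ((1 - t) • cfc g X + t • cfc g Y).IsHermitian := by
    have h1 : IsSelfAdjoint (cfc g X) := cfc_predicate g X
    have h2 : IsSelfAdjoint (cfc g Y) := cfc_predicate g Y
    exact ((IsSelfAdjoint.all (1 - t)).smul h1).add ((IsSelfAdjoint.all t).smul h2)
  have step : ∀ r : ℝ, 0 < r → MLE ((1 - t) • cfc g X + t • cfc g Y)
      (cfc g ((1 + r ^ 2) • ((1 - t) • X + t • Y))) := by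
    intro r hr
    have := concave_core g hm (V₁ := V₁) (V₂ := V₂) (W₁ := a • V₁ + b • V₂)
      (W₂ := (-b) • V₁ + a • V₂) hX hY hZ hE h11 h22 h12 h21 hs ?_ ?_ ?_ ?_ ?_ ?_ ?_ a b rfl r hr
    · rwa [ha, hb] at this
    all_goals
      have g11 : ∀ M : Matrix (Fin n) (Fin n) ℂ, V₁ᴴ * (V₁ * M) = M := fun M => by
        rw [← Matrix.mul_assoc, h11, Matrix.one_mul]
      have g22 : ∀ M : Matrix (Fin n) (Fin n) ℂ, V₂ᴴ * (V₂ * M) = M := fun M => by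
        rw [← Matrix.mul_assoc, h22, Matrix.one_mul]
      have g12 : ∀ M : Matrix (Fin n) (Fin n) ℂ, V₁ᴴ * (V₂ * M) = 0 := fun M => by
        rw [← Matrix.mul_assoc, h12, Matrix.zero_mul]
      have g21 : ∀ M : Matrix (Fin n) (Fin n) ℂ, V₂ᴴ * (V₁ * M) = 0 := fun M => by
        rw [← Matrix.mul_assoc, h21, Matrix.zero_mul]
      simp only [Matrix.conjTranspose_add, Matrix.conjTranspose_smul, star_trivial, Matrix.mul_add,
        Matrix.add_mul, Matrix.smul_mul, Matrix.mul_smul, Matrix.mul_assoc, h11, h22, h12,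
        h21, g11, g22, g12, g21, Matrix.mul_one, Matrix.mul_zero, smul_zero, add_zero, zero_add,
        smul_smul, smul_add]
    · rw [← add_smul, hab, one_smul]
    · rw [← add_smul, neg_mul_neg, add_comm, hab, one_smul]
    · rw [← add_smul]; ring_nf; simp
    · rw [← add_smul]; ring_nf; simp
    · rw [← hs]
      generalize V₁ * V₁ᴴ = P
      generalize V₂ * V₂ᴴ = Q
      linear_combination (norm := module) hab • P + hab • Q
    · rw [ha, hb]
    · rw [neg_mul_neg, ha, hb, add_comm]
  refine mle_limit hM hZ g (fun r x => g ((1 + r ^ 2) * x)) (nhdsWithin 0 (Set.Ioi 0)) ?_ ?_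
  · filter_upwards [self_mem_nhdsWithin] with r hr
    have hs : IsSelfAdjoint ((1 - t) • X + t • Y) := hZ.1
    have := cfc_comp_const_mul (1 + r ^ 2) g ((1 - t) • X + t • Y)
      ((Matrix.finite_real_spectrum).image _ |>.continuousOn g)
    rw [this]
    exact step r hr
  · intro x hx
    have hc : ContinuousAt g x := hg.continuousAt (Ioi_mem_nhds hx)
    have : Filter.Tendsto (fun r : ℝ => (1 + r ^ 2) * x) (nhds 0) (nhds x) := by
      have h : Continuous fun r : ℝ => (1 + r ^ 2) * x := by fun_prop
      simpa using h.tendsto 0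
    exact hc.tendsto.comp (this.mono_left nhdsWithin_le_nhds)

lemma mono_of_concave (g : ℝ → ℝ) (hg : ContinuousOn g (Set.Ioi 0)) (hp : ∀ x, 0 < x → 0 < g x)
    (hc : OpConcave g) : OperatorMonotone g := by
  intro n A B hA hB hAB
  have hsB : IsSelfAdjoint B := hB.1
  refine mle_limit (cfc_predicate g A) hB g (fun t x => (1 - t)⁻¹ * g ((1 - t) * x + t))
    (nhdsWithin 0 (Set.Ioi 0)) ?_ ?_
  · filter_upwards [Ioo_mem_nhdsGT (zero_lt_one' ℝ)] with t ht
    have ht1 : 0 < 1 - t := sub_pos.2 ht.2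
    have hD : (((1 - t) * t⁻¹) • (B - A) + 1).PosDef :=
      Matrix.PosDef.posSemidef_add (Matrix.PosSemidef.smul hAB
        (mul_nonneg ht1.le (inv_pos.2 ht.1).le)) Matrix.PosDef.one
    have h1 := hc n A _ hA hD t ⟨ht.1.le, ht.2.le⟩
    have h2 := cfc_posSemidef hD g (fun x hx => (hp x hx).le)
    have e : (1 - t) • A + t • (((1 - t) * t⁻¹) • (B - A) + 1) = cfc (fun x => (1 - t) * x + t) B := by
      rw [cfc_add_const t (fun x => (1 - t) * x) B (cont_spec _ _), cfc_const_mul_id (1 - t) B,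
        Algebra.algebraMap_eq_smul_one, smul_add, smul_smul]
      have : t * ((1 - t) * t⁻¹) = 1 - t := by field_simp [ht.1.ne']
      rw [this]
      module
    rw [e, ← cfc_comp' g (fun x => (1 - t) * x + t) B
      ((Matrix.finite_real_spectrum).image _ |>.continuousOn g) (cont_spec _ _)] at h1
    rw [cfc_const_mul _ _ _ (cont_spec _ _)]
    unfold MLE at *
    convert (h1.add (h2.smul ht.1.le)).smul (inv_pos.2 ht1).le using 1
    have : cfc g A = (1 - t)⁻¹ • ((1 - t) • cfc g A) := by
      rw [smul_smul, inv_mul_cancel₀ ht1.ne', one_smul]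
    conv_lhs => rw [this]
    module
  · intro x hx
    have hc : ContinuousAt g x := hg.continuousAt (Ioi_mem_nhds hx)
    have h1 : Filter.Tendsto (fun t : ℝ => (1 - t) * x + t) (nhds 0) (nhds x) := by
      have h : Continuous fun t : ℝ => (1 - t) * x + t := by fun_prop
      simpa using h.tendsto 0
    have h2 : Filter.Tendsto (fun t : ℝ => (1 - t)⁻¹) (nhds 0) (nhds 1) := by
      have h : ContinuousAt (fun t : ℝ => (1 - t)⁻¹) 0 := by
        apply ContinuousAt.inv₀ (by fun_prop); simp
      simpa using h.tendsto
    simpa using (h2.mul (hc.tendsto.comp h1)).mono_left nhdsWithin_le_nhds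

lemma conj_mono (f : ℝ → ℝ) (hp : ∀ x, 0 < x → 0 < f x) (hm : OperatorMonotone f) :
    OperatorMonotone (fun x => (f x⁻¹)⁻¹) := by
  intro n A B hA hB hAB
  rw [cfc_conj hA f hp, cfc_conj hB f hp]
  exact mle_inv (cfc_posDef hB.inv f hp) (cfc_posDef hA.inv f hp)
    (hm n _ _ hB.inv hA.inv (mle_inv hA hB hAB))

lemma pd_inv_inv {n : ℕ} {A : Matrix (Fin n) (Fin n) ℂ} (hA : A.PosDef) : A⁻¹⁻¹ = A :=
  Matrix.nonsing_inv_nonsing_inv A ((Matrix.isUnit_iff_isUnit_det A).1 hA.isUnit)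

theorem stmt_6 (f : ℝ → ℝ) (hf : ContinuousOn f (Set.Ioi 0))
    (hf' : ∀ x ∈ Set.Ioi (0:ℝ), f x ∈ Set.Ioi (0:ℝ)) :
    OperatorMonotone f ↔
      ∀ (n : ℕ) (A B : Matrix (Fin n) (Fin n) ℂ), A.PosDef → B.PosDef →
        ∀ t ∈ Set.Icc (0:ℝ) 1,
          MLE (cfc f (wharm t A B)) (wharm t (cfc f A) (cfc f B)) := by
  have hp : ∀ x, 0 < x → 0 < f x := hf'
  let g : ℝ → ℝ := fun x => (f x⁻¹)⁻¹
  have hgp : ∀ x, 0 < x → 0 < g x := fun x hx => inv_pos.2 (hp _ (inv_pos.2 hx))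
  have hgc : ContinuousOn g (Set.Ioi 0) := by
    refine ContinuousOn.inv₀ (hf.comp (continuousOn_inv₀.mono fun x hx => ne_of_gt hx)
      fun x hx => Set.mem_Ioi.2 (inv_pos.2 hx)) fun x hx => (hp _ (inv_pos.2 hx)).ne'
  have hfg : f = fun x => (g x⁻¹)⁻¹ := by funext x; simp [g]
  have hfi : ∀ (n : ℕ) (X : Matrix (Fin n) (Fin n) ℂ), X.PosDef → cfc f X⁻¹ = (cfc g X)⁻¹ := by
    intro n X hX
    rw [cfc_conj hX f hp, pd_inv_inv (cfc_posDef hX.inv f hp)]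
  have hgi : ∀ (n : ℕ) (X : Matrix (Fin n) (Fin n) ℂ), X.PosDef → (cfc f X)⁻¹ = cfc g X⁻¹ := by
    intro n X hX
    rw [cfc_conj hX.inv f hp, pd_inv_inv hX]
  constructor
  · intro hm n A B hA hB t ht
    have h := concave_of_mono g hgc (conj_mono f hp hm) n A⁻¹ B⁻¹ hA.inv hB.inv t ht
    unfold wharm
    rw [hfi n _ (comb_posDef hA.inv hB.inv ht), hgi n A hA, hgi n B hB]
    exact mle_inv (comb_posDef (cfc_posDef hA.inv g hgp) (cfc_posDef hB.inv g hgp) ht)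
      (cfc_posDef (comb_posDef hA.inv hB.inv ht) g hgp) h
  · intro H
    rw [hfg]
    refine conj_mono g hgp (mono_of_concave g hgc hgp ?_)
    intro n X Y hX hY t ht
    have h := H n X⁻¹ Y⁻¹ hX.inv hY.inv t ht
    unfold wharm at h
    rw [hgi n _ hX.inv, hgi n _ hY.inv, pd_inv_inv hX, pd_inv_inv hY,
      hfi n _ (comb_posDef hX hY ht)] at h
    have h1 := comb_posDef (cfc_posDef hX g hgp) (cfc_posDef hY g hgp) ht
    have h2 := cfc_posDef (comb_posDef hX hY ht) g hgp
    have := mle_inv h2.inv h1.inv h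
    rwa [pd_inv_inv h1, pd_inv_inv h2] at this
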